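/- The entrywise application of τ to 3 × 3 quaternionic matrices preserves trace-one Hermitian projectors: if A is a 3 × 3 matrix over ℍ with Aᴴ = A (where Aᴴ is the conjugate transpose with respect to quaternionic conjugation), A·A = A, and trace A = 1, then the matrix τ(A) with entries τ(A)ᵢⱼ = τ(Aᵢⱼ) also satisfies τ(A)ᴴ = τ(A), τ(A)·τ(A) = τ(A), and trace τ(A) = 1. -/

import Mathlib

open Quaternion Matrix

/-- The involution of the quaternions obtained by conjugating both complex
coordinates in `ℍ = ℂ ⊕ ℂj`: `τ⟨a,b,c,d⟩ = ⟨a,−b,c,−d⟩`. -/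
def qtau (x : ℍ[ℝ]) : ℍ[ℝ] := ⟨x.re, -x.imI, x.imJ, -x.imK⟩

/-- The basis quaternion `j`, conjugation by which is `qtau`. -/
@[simps]
def quaternionJ : ℍ[ℝ] := ⟨0, 0, 1, 0⟩

theorem quaternionJ_mem_unitary : quaternionJ ∈ unitary ℍ[ℝ] := by
  constructor <;> ext <;> simp

theorem coe_conjStarAlgAut_quaternionJ :
    ⇑(Unitary.conjStarAlgAut ℝ ℍ[ℝ] ⟨quaternionJ, quaternionJ_mem_unitary⟩) = qtau := by
  funext x
  rw [Unitary.conjStarAlgAut_apply]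
  ext <;> simp [qtau]

theorem entrywise_qtau_preserves_trace_one_hermitian_projectors_general
    {n R S F : Type*} [Fintype n] [NonAssocSemiring R] [NonAssocSemiring S] [Star R] [Star S]
    [FunLike F R S] [RingHomClass F R S] [StarHomClass F R S] (φ : F)
    (A : Matrix n n R) (hHerm : Aᴴ = A) (hProj : A * A = A) (hTr : A.trace = 1) :
    (A.map φ)ᴴ = A.map φ ∧ A.map φ * A.map φ = A.map φ ∧ (A.map φ).trace = 1 := by
  refine ⟨?_, ?_, ?_⟩
  · exact IsHermitian.map hHerm φ (map_star φ)
  · rw [← Matrix.map_mul, hProj]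
  · rw [← AddMonoidHom.map_trace, hTr, map_one]

theorem entrywise_qtau_preserves_trace_one_hermitian_projectors
    (A : Matrix (Fin 3) (Fin 3) ℍ[ℝ])
    (hHerm : Aᴴ = A) (hProj : A * A = A) (hTr : A.trace = 1) :
    (A.map qtau)ᴴ = A.map qtau ∧
    (A.map qtau) * (A.map qtau) = A.map qtau ∧
    (A.map qtau).trace = 1 := by
  rw [← coe_conjStarAlgAut_quaternionJ]
  exact entrywise_qtau_preserves_trace_one_hermitian_projectors_general _ A hHerm hProj hTr
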